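/- (Theorem 9: asymptotic normality of the oracle DRL average under α-mixing.) Assume μ_b is invariant for the behavior state chain (μ_b.bind K_b = μ_b), that 0 ≤ w ≤ C_w and 0 ≤ η ≤ C_η for finite constants C_w, C_η, and that the α-mixing coefficients of the stationary process X_t = (s_t, a_t, r_t, s_{t+1}) under P_b are summable: Σ_{m=1}^∞ α_m < ∞, where α_m = sup_t sup { |P_b(G ∩ H) − P_b(G)·P_b(H)| : G ∈ σ(X_0, …, X_t), H ∈ σ(X_{t+m}, X_{t+m+1}, …) }. Then, as T → ∞, the law of √(T+1) · ( (T+1)⁻¹ Σ_{t=0}^T ψ(s_t, a_t, r_t, s_{t+1}; w, q) − ρ ) converges weakly to the Gaussian distribution N(0, σ²) on ℝ, where σ² = E_D[ w(s)² η(s,a)² (r + γ v(s') − q(s,a))² ]. -/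

import Mathlib

/-!
Since `q` solves the Bellman equation, `ψ(X_t; w, q) - ρ` is `w η` times the temporal-difference
error of `q`, whose conditional mean given the trajectory up to the state `s_t` vanishes: these
centred terms are bounded martingale differences `Z_t`. Following McLeish, `exp (iθ ∑ Z_t / √n)` is
close to `∏ (1 + iθ Z_t / √n) · exp (-θ² σ² / 2)`, and the product has expectation exactly one, so
the characteristic functions converge as soon as `n⁻¹ ∑ Z_t² → σ²` in `L¹`. By stationarity the
averages have mean `σ²`, and by the covariance inequality for mixing σ-algebras their variances are
`O(n⁻¹ ∑_{m < n} α_m)`, which tends to zero by Cesàro.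
-/

open MeasureTheory ProbabilityTheory Filter
open scoped ENNReal BoundedContinuousFunction

noncomputable section

variable {S A : Type*} [MeasurableSpace S] [MeasurableSpace A]

/-- `t`-fold composition of a Markov kernel with itself. -/
def kpow {α : Type*} [MeasurableSpace α] (K : Kernel α α) : ℕ → Kernel α α
  | 0 => Kernel.id
  | n + 1 => K ∘ₖ kpow K n

/-- The state-transition kernel induced by a policy `π`. -/
def stateKernel (P : Kernel (S × A) S) (π : Kernel S A) [IsSFiniteKernel π] :
    Kernel S S :=
  P ∘ₖ (Kernel.id ×ₖ π)

/-- The discounted average visitation measure. -/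
def dgamma (γ : ℝ) (μe : Measure S) (Ke : Kernel S S) : Measure S :=
  ENNReal.ofReal (1 - γ) •
    Measure.sum fun t : ℕ => ENNReal.ofReal γ ^ t • μe.bind fun s => kpow Ke t s

/-- The data distribution `D`. -/
def dataLaw (P : Kernel (S × A) S) (R : Kernel (S × A) ℝ) (πb : Kernel S A)
    (μb : Measure S) : Measure (S × A × ℝ × S) :=
  μb.bind fun s => (πb s).bind fun a => (R (s, a)).bind fun r =>
    (P (s, a)).map fun s' => (s, a, r, s')

/-- The DRL estimating function `ψ(s,a,r,s'; w', q')`. -/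
def psiDRL (γ : ℝ) (μe : Measure S) (πe : Kernel S A) (η : S → A → ℝ)
    (w' : S → ℝ) (q' : S → A → ℝ) (x : S × A × ℝ × S) : ℝ :=
  (1 - γ) * (∫ s, (∫ a, q' s a ∂(πe s)) ∂μe) +
    w' x.1 * η x.1 x.2.1 *
      (x.2.2.1 + γ * (∫ a, q' x.2.2.2 a ∂(πe x.2.2.2)) - q' x.1 x.2.1)

/-- The law of the initial triple `(s₀, a₀, r₀)` under the behavior policy. -/
def initLaw (R : Kernel (S × A) ℝ) (πb : Kernel S A) (μb : Measure S) :
    Measure (S × A × ℝ) :=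
  μb.bind fun s => (πb s).bind fun a => (R (s, a)).map fun r => (s, a, r)

/-- The one-step transition of the behavior trajectory. -/
def stepLaw (P : Kernel (S × A) S) (R : Kernel (S × A) ℝ) (πb : Kernel S A)
    (x : S × A × ℝ) : Measure (S × A × ℝ) :=
  (P (x.1, x.2.1)).bind fun s' => (πb s').bind fun a' =>
    (R (s', a')).map fun r' => (s', a', r')

/-- The law of the length-`(n+1)` prefix of the behavior trajectory. -/
def finLaw (P : Kernel (S × A) S) (R : Kernel (S × A) ℝ) (πb : Kernel S A)
    (μb : Measure S) : (n : ℕ) → Measure (Fin (n + 1) → S × A × ℝ)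
  | 0 => (initLaw R πb μb).map fun x => fun _ => x
  | n + 1 => (finLaw P R πb μb n).bind fun path =>
      (stepLaw P R πb (path (Fin.last n))).map (Fin.snoc path)

/-- The transition observed at time `t` along a trajectory. -/
def Xt (t : ℕ) (ω : ℕ → S × A × ℝ) : S × A × ℝ × S :=
  ((ω t).1, (ω t).2.1, (ω t).2.2, (ω (t + 1)).1)

/-- The σ-algebra generated by `X_0, …, X_t`. -/
def pastSA (t : ℕ) : MeasurableSpace (ℕ → S × A × ℝ) :=
  ⨆ i : Fin (t + 1), MeasurableSpace.comap (Xt (i : ℕ)) inferInstance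

/-- The σ-algebra generated by `X_m, X_{m+1}, …`. -/
def futureSA (m : ℕ) : MeasurableSpace (ℕ → S × A × ℝ) :=
  ⨆ i : ℕ, MeasurableSpace.comap (Xt (m + i)) inferInstance

/-- The α-mixing coefficient of the process `(X_t)` under `Pb`, at lag `m`. -/
def alphaMix (Pb : Measure (ℕ → S × A × ℝ)) (m : ℕ) : ℝ :=
  sSup {x : ℝ | ∃ (t : ℕ) (G H : Set (ℕ → S × A × ℝ)),
    MeasurableSet[pastSA (S := S) (A := A) t] G ∧
    MeasurableSet[futureSA (S := S) (A := A) (t + m)] H ∧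
    x = |(Pb (G ∩ H)).toReal - (Pb G).toReal * (Pb H).toReal|}

open scoped Topology

section ComplexExponential

lemma abs_exp_sub_exp_le_of_nonpos {x y : ℝ} (hx : x ≤ 0) (hy : y ≤ 0) :
    |Real.exp x - Real.exp y| ≤ |x - y| := by
  have hderiv : ∀ z ∈ Set.Iic (0 : ℝ), HasDerivWithinAt Real.exp (Real.exp z) (Set.Iic 0) z :=
    fun z _ ↦ (Real.hasDerivAt_exp z).hasDerivWithinAt
  simpa using (convex_Iic (0 : ℝ)).norm_image_sub_le_of_norm_hasDerivWithin_le (C := 1) hderiv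
    (fun z hz ↦ by simpa using hz) hy hx

lemma norm_one_add_mul_I_le_exp (x : ℝ) :
    ‖(1 + x * Complex.I : ℂ)‖ ≤ Real.exp (x ^ 2 / 2) := by
  have hnorm : ‖(1 + x * Complex.I : ℂ)‖ = √(1 + x ^ 2) := by
    simpa using Complex.norm_add_mul_I 1 x
  rw [hnorm, Real.exp_half]
  exact Real.sqrt_le_sqrt (by linarith [Real.add_one_le_exp (x ^ 2)])

lemma norm_prod_sub_prod_le_sum {ι R : Type*} [NormedCommRing R] [NormOneClass R]
    (s : Finset ι) {a b : ι → R} (ha : ∀ i ∈ s, ‖a i‖ ≤ 1) (hb : ∀ i ∈ s, ‖b i‖ ≤ 1) :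
    ‖∏ i ∈ s, a i - ∏ i ∈ s, b i‖ ≤ ∑ i ∈ s, ‖a i - b i‖ := by
  classical
  induction s using Finset.induction_on with
  | empty => simp
  | insert j s hj ih =>
    simp only [Finset.forall_mem_insert] at ha hb
    have hprod_b : ‖∏ i ∈ s, b i‖ ≤ 1 :=
      (Finset.norm_prod_le s b).trans (Finset.prod_le_one (fun _ _ ↦ norm_nonneg _) hb.2)
    rw [Finset.prod_insert hj, Finset.prod_insert hj, Finset.sum_insert hj]
    calc ‖a j * ∏ i ∈ s, a i - b j * ∏ i ∈ s, b i‖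
        = ‖(a j - b j) * ∏ i ∈ s, b i + a j * (∏ i ∈ s, a i - ∏ i ∈ s, b i)‖ := by ring_nf
      _ ≤ ‖a j - b j‖ * ‖∏ i ∈ s, b i‖ + ‖a j‖ * ‖∏ i ∈ s, a i - ∏ i ∈ s, b i‖ :=
        (norm_add_le _ _).trans (add_le_add (norm_mul_le _ _) (norm_mul_le _ _))
      _ ≤ ‖a j - b j‖ * 1 + 1 * ∑ i ∈ s, ‖a i - b i‖ := by
        gcongr
        exacts [ha.1, ih ha.2 hb.2]
      _ = ‖a j - b j‖ + ∑ i ∈ s, ‖a i - b i‖ := by ring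

lemma norm_exp_mul_I_sub_le {x : ℝ} (hx : |x| ≤ 1) :
    ‖Complex.exp (x * Complex.I) - (1 + x * Complex.I) * Real.exp (-(x ^ 2 / 2))‖
      ≤ 2 * |x| ^ 3 := by
  set d : ℝ := Real.exp (-(x ^ 2 / 2)) - (1 - x ^ 2 / 2) with hd
  have hsq : x ^ 2 ≤ 1 := (sq_le_one_iff_abs_le_one x).2 hx
  have hd_le : |d| ≤ |x| ^ 3 / 4 := by
    have hexp := Real.abs_exp_sub_one_sub_id_le (x := -(x ^ 2 / 2))
      (by rw [abs_neg, abs_of_nonneg (by positivity)]; linarith)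
    calc |d| ≤ (x ^ 2 / 2) ^ 2 := by convert hexp using 1 <;> [(rw [hd]; ring_nf); ring]
      _ = |x| ^ 3 / 4 * |x| := by rw [← sq_abs x]; ring
      _ ≤ |x| ^ 3 / 4 := mul_le_of_le_one_right (by positivity) hx
  have htaylor : ‖Complex.exp (x * Complex.I) - (1 + x * Complex.I - x ^ 2 / 2)‖ ≤ |x| ^ 3 := by
    have hbound := Complex.exp_bound (x := x * Complex.I) (n := 3) (by simpa using hx) (by norm_num)
    have hsum : ∑ m ∈ Finset.range 3, (x * Complex.I) ^ m / (m.factorial : ℂ)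
        = 1 + x * Complex.I - x ^ 2 / 2 := by
      simp [Finset.sum_range_succ, mul_pow, Nat.factorial]
      ring
    have hnorm : ‖(x * Complex.I : ℂ)‖ = |x| := by simp
    rw [hsum, hnorm] at hbound
    exact hbound.trans (mul_le_of_le_one_right (by positivity) (by norm_num [Nat.factorial]))
  have hsplit : Complex.exp (x * Complex.I) - (1 + x * Complex.I) * Real.exp (-(x ^ 2 / 2))
      = (Complex.exp (x * Complex.I) - (1 + x * Complex.I - x ^ 2 / 2))
        + ((x ^ 3 / 2 : ℝ) * Complex.I - (1 + x * Complex.I) * d) := by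
    rw [hd]; push_cast; ring
  have hfst : ‖((x ^ 3 / 2 : ℝ) * Complex.I : ℂ)‖ = |x| ^ 3 / 2 := by
    simp
  have hsnd : ‖(1 + x * Complex.I) * d‖ ≤ |x| ^ 3 / 2 := by
    have htwo : ‖(1 + x * Complex.I : ℂ)‖ ≤ 2 :=
      (norm_add_le_of_le norm_one.le (by simpa using hx)).trans_eq one_add_one_eq_two
    rw [norm_mul, Complex.norm_real, Real.norm_eq_abs]
    calc ‖(1 + x * Complex.I : ℂ)‖ * |d| ≤ 2 * (|x| ^ 3 / 4) := by gcongr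
      _ = |x| ^ 3 / 2 := by ring
  rw [hsplit]
  refine (norm_add_le_of_le htaylor (norm_sub_le_of_le hfst.le hsnd)).trans (by linarith)

/-- McLeish's replacement of `exp (i ∑ xᵢ)` by `∏ (1 + i xᵢ)`: the latter has constant expectation
along martingale differences, and `exp (-v / 2)` is the Gaussian limit. -/
lemma norm_exp_sum_mul_I_sub_prod_mul_exp_le {ι : Type*} (s : Finset ι) {x : ι → ℝ}
    (hx : ∀ i ∈ s, |x i| ≤ 1) {v : ℝ} (hv : 0 ≤ v) :
    ‖Complex.exp ((∑ i ∈ s, x i : ℝ) * Complex.I)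
        - (∏ i ∈ s, (1 + x i * Complex.I)) * Real.exp (-(v / 2))‖
      ≤ 2 * ∑ i ∈ s, |x i| ^ 3
        + Real.exp ((∑ i ∈ s, x i ^ 2) / 2) * |∑ i ∈ s, x i ^ 2 - v| := by
  set V := ∑ i ∈ s, x i ^ 2
  have hV0 : 0 ≤ V := Finset.sum_nonneg fun i _ ↦ sq_nonneg _
  have hexp : Complex.exp ((∑ i ∈ s, x i : ℝ) * Complex.I)
      = ∏ i ∈ s, Complex.exp (x i * Complex.I) := by
    rw [← Complex.exp_sum, Complex.ofReal_sum, Finset.sum_mul]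
  have hprod : (∏ i ∈ s, (1 + x i * Complex.I)) * Real.exp (-(V / 2))
      = ∏ i ∈ s, (1 + x i * Complex.I) * Real.exp (-(x i ^ 2 / 2)) := by
    rw [Finset.prod_mul_distrib, ← Complex.ofReal_prod, ← Real.exp_sum, Finset.sum_neg_distrib,
      ← Finset.sum_div]
  have hfactor : ∀ i ∈ s, ‖(1 + x i * Complex.I) * Real.exp (-(x i ^ 2 / 2))‖ ≤ 1 := by
    intro i _
    rw [norm_mul, Complex.norm_real, Real.norm_of_nonneg (Real.exp_nonneg _), Real.exp_neg]
    exact mul_inv_le_one_of_le₀ (norm_one_add_mul_I_le_exp _) (Real.exp_nonneg _)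
  have hmain : ‖Complex.exp ((∑ i ∈ s, x i : ℝ) * Complex.I)
      - (∏ i ∈ s, (1 + x i * Complex.I)) * Real.exp (-(V / 2))‖ ≤ 2 * ∑ i ∈ s, |x i| ^ 3 := by
    rw [hexp, hprod, Finset.mul_sum]
    exact (norm_prod_sub_prod_le_sum s (fun i _ ↦ (Complex.norm_exp_ofReal_mul_I _).le)
      hfactor).trans (Finset.sum_le_sum fun i hi ↦ norm_exp_mul_I_sub_le (hx i hi))
  have hnorm_prod : ‖∏ i ∈ s, (1 + x i * Complex.I)‖ ≤ Real.exp (V / 2) := by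
    rw [norm_prod, Finset.sum_div, Real.exp_sum]
    exact Finset.prod_le_prod (fun _ _ ↦ norm_nonneg _) fun i _ ↦ norm_one_add_mul_I_le_exp _
  have hvariance : |Real.exp (-(V / 2)) - Real.exp (-(v / 2))| ≤ |V - v| := by
    refine (abs_exp_sub_exp_le_of_nonpos (by linarith) (by linarith)).trans ?_
    rw [show -(V / 2) - -(v / 2) = -((V - v) / 2) by ring, abs_neg, abs_div, abs_two]
    exact half_le_self (abs_nonneg _)
  have herror : ‖(∏ i ∈ s, (1 + x i * Complex.I))
      * ((Real.exp (-(V / 2)) - Real.exp (-(v / 2)) : ℝ) : ℂ)‖ ≤ Real.exp (V / 2) * |V - v| := by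
    rw [norm_mul, Complex.norm_real, Real.norm_eq_abs]
    gcongr
  refine le_trans (le_of_eq ?_) (norm_add_le_of_le hmain herror)
  push_cast
  ring_nf

lemma norm_exp_sum_mul_I_sub_prod_mul_exp_le_of_abs_le {ι : Type*} (s : Finset ι) {x : ι → ℝ}
    {δ : ℝ} (hδ : δ ≤ 1) (hx : ∀ i ∈ s, |x i| ≤ δ) {v : ℝ} (hv : 0 ≤ v) :
    ‖Complex.exp ((∑ i ∈ s, x i : ℝ) * Complex.I)
        - (∏ i ∈ s, (1 + x i * Complex.I)) * Real.exp (-(v / 2))‖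
      ≤ 2 * (s.card * δ ^ 3)
        + Real.exp (s.card * δ ^ 2 / 2) * |∑ i ∈ s, x i ^ 2 - v| := by
  have hcube : ∑ i ∈ s, |x i| ^ 3 ≤ s.card * δ ^ 3 := by
    simpa using s.sum_le_card_nsmul _ _ fun i hi ↦ pow_le_pow_left₀ (abs_nonneg _) (hx i hi) 3
  have hsq : ∑ i ∈ s, x i ^ 2 ≤ s.card * δ ^ 2 := by
    simpa using s.sum_le_card_nsmul _ _ fun i hi ↦
      sq_le_sq' (abs_le.1 (hx i hi)).1 (abs_le.1 (hx i hi)).2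
  refine (norm_exp_sum_mul_I_sub_prod_mul_exp_le s (fun i hi ↦ (hx i hi).trans hδ) hv).trans ?_
  gcongr

end ComplexExponential

open scoped NNReal

section MartingaleCLT

variable {Ω Ω' : Type*} {mΩ : MeasurableSpace Ω} {mΩ' : MeasurableSpace Ω'}
  {μ : Measure Ω} [IsProbabilityMeasure μ] {ℱ : Filtration ℕ mΩ} {Z : ℕ → Ω → ℝ}

lemma integral_prod_one_add_smul_eq_one (hZ : ∀ n, StronglyMeasurable[ℱ (n + 1)] (Z n))
    (hbdd : ∀ n, ∃ C, ∀ᵐ ω ∂μ, |Z n ω| ≤ C) (hcond : ∀ n, μ[Z n | ℱ n] =ᵐ[μ] 0) (c : ℂ) (n : ℕ) :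
    Integrable (fun ω ↦ ∏ i ∈ Finset.range n, (1 + Z i ω • c)) μ ∧
      ∫ ω, ∏ i ∈ Finset.range n, (1 + Z i ω • c) ∂μ = 1 := by
  induction n with
  | zero => simp
  | succ n ih =>
    obtain ⟨hint, hone⟩ := ih
    obtain ⟨C, hC⟩ := hbdd n
    set T : Ω → ℂ := fun ω ↦ ∏ i ∈ Finset.range n, (1 + Z i ω • c)
    have hT : StronglyMeasurable[ℱ n] T := by
      refine Finset.stronglyMeasurable_fun_prod _ fun i hi ↦ ?_
      exact stronglyMeasurable_const.add
        (((hZ i).mono (ℱ.mono (Finset.mem_range.1 hi))).smul_const c)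
    have hZ_meas : AEStronglyMeasurable (Z n) μ := ((hZ n).mono (ℱ.le _)).aestronglyMeasurable
    have hZT : Integrable (Z n • T) μ := hint.bdd_smul C hZ_meas hC
    have hzero : ∫ ω, (Z n • T) ω ∂μ = 0 := by
      rw [← integral_condExp (ℱ.le n)]
      refine integral_eq_zero_of_ae ?_
      filter_upwards [condExp_smul_of_aestronglyMeasurable_right (.of_bound hZ_meas C hC)
        hZT hT.aestronglyMeasurable, hcond n] with ω hpull h0
      rw [hpull, Pi.smul_apply', h0, Pi.zero_apply, zero_smul, Pi.zero_apply]
    have hsucc : (fun ω ↦ ∏ i ∈ Finset.range (n + 1), (1 + Z i ω • c))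
        = fun ω ↦ T ω + (Z n • T) ω * c := by
      funext ω
      rw [Finset.prod_range_succ, mul_one_add, mul_smul_comm, Pi.smul_apply', smul_mul_assoc]
    rw [hsucc]
    refine ⟨hint.add (hZT.mul_const c), ?_⟩
    rw [integral_add hint (hZT.mul_const c), integral_mul_const, hone, hzero, zero_mul, add_zero]

lemma norm_integral_exp_sum_mul_I_sub_exp_le (hZ : ∀ n, StronglyMeasurable[ℱ (n + 1)] (Z n))
    {δ : ℝ} (hδ : δ ≤ 1) (hbdd : ∀ n, ∀ᵐ ω ∂μ, |Z n ω| ≤ δ) (hcond : ∀ n, μ[Z n | ℱ n] =ᵐ[μ] 0)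
    {v : ℝ} (hv : 0 ≤ v) (n : ℕ) :
    ‖∫ ω, Complex.exp ((∑ k ∈ Finset.range n, Z k ω : ℝ) * Complex.I) ∂μ - Real.exp (-(v / 2))‖
      ≤ 2 * (n * δ ^ 3)
        + Real.exp (n * δ ^ 2 / 2) * ∫ ω, |∑ k ∈ Finset.range n, Z k ω ^ 2 - v| ∂μ := by
  have hmeas (k : ℕ) : AEStronglyMeasurable (Z k) μ :=
    ((hZ k).mono (ℱ.le _)).aestronglyMeasurable
  obtain ⟨hTint, hTone⟩ :=
    integral_prod_one_add_smul_eq_one hZ (fun k ↦ ⟨δ, hbdd k⟩) hcond Complex.I n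
  have hexp_int : Integrable
      (fun ω ↦ Complex.exp ((∑ k ∈ Finset.range n, Z k ω : ℝ) * Complex.I)) μ :=
    .of_bound (by fun_prop) 1 (ae_of_all _ fun ω ↦ (Complex.norm_exp_ofReal_mul_I _).le)
  have hvar_int : Integrable (fun ω ↦ |∑ k ∈ Finset.range n, Z k ω ^ 2 - v|) μ := by
    refine ((integrable_finsetSum _ fun k _ ↦ ?_).sub (integrable_const v)).abs
    refine .of_bound (by fun_prop) (δ ^ 2) ?_
    filter_upwards [hbdd k] with ω hω
    simpa [sq_abs] using pow_le_pow_left₀ (abs_nonneg _) hω 2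
  have hpointwise : ∀ᵐ ω ∂μ,
      ‖Complex.exp ((∑ k ∈ Finset.range n, Z k ω : ℝ) * Complex.I)
        - (∏ k ∈ Finset.range n, (1 + Z k ω • Complex.I)) * Real.exp (-(v / 2))‖
      ≤ 2 * (n * δ ^ 3) + Real.exp (n * δ ^ 2 / 2) * |∑ k ∈ Finset.range n, Z k ω ^ 2 - v| := by
    filter_upwards [ae_all_iff.2 hbdd] with ω hω
    simpa using norm_exp_sum_mul_I_sub_prod_mul_exp_le_of_abs_le (Finset.range n) hδ
      (fun k _ ↦ hω k) hv
  calc ‖∫ ω, Complex.exp ((∑ k ∈ Finset.range n, Z k ω : ℝ) * Complex.I) ∂μ - Real.exp (-(v / 2))‖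
      = ‖∫ ω, (Complex.exp ((∑ k ∈ Finset.range n, Z k ω : ℝ) * Complex.I)
          - (∏ k ∈ Finset.range n, (1 + Z k ω • Complex.I)) * Real.exp (-(v / 2))) ∂μ‖ := by
        rw [integral_sub hexp_int (hTint.mul_const _), integral_mul_const, hTone, one_mul]
    _ ≤ ∫ ω, (2 * (n * δ ^ 3)
          + Real.exp (n * δ ^ 2 / 2) * |∑ k ∈ Finset.range n, Z k ω ^ 2 - v|) ∂μ :=
        norm_integral_le_of_norm_le ((integrable_const _).add (hvar_int.const_mul _)) hpointwise
    _ = _ := by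
        rw [integral_add (integrable_const _) (hvar_int.const_mul _),
          integral_const_mul (Real.exp _)]
        simp

lemma norm_charFun_inv_sqrt_mul_sum_sub_exp_le (hZ : ∀ n, StronglyMeasurable[ℱ (n + 1)] (Z n))
    {C : ℝ} (hbdd : ∀ n, ∀ᵐ ω ∂μ, |Z n ω| ≤ C) (hcond : ∀ n, μ[Z n | ℱ n] =ᵐ[μ] 0)
    {v : ℝ} (hv : 0 ≤ v) {t : ℝ} {n : ℕ} (hn : n ≠ 0) (ht : (√n)⁻¹ * (|t| * C) ≤ 1) :
    ‖charFun (μ.map fun ω ↦ (√n)⁻¹ * ∑ k ∈ Finset.range n, Z k ω) t - Real.exp (-(t ^ 2 * v / 2))‖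
      ≤ 2 * ((|t| * C) ^ 2 * ((√n)⁻¹ * (|t| * C))) + Real.exp ((|t| * C) ^ 2 / 2) *
        (t ^ 2 * ∫ ω, |(n : ℝ)⁻¹ * ∑ k ∈ Finset.range n, Z k ω ^ 2 - v| ∂μ) := by
  have hmeas (k : ℕ) : AEStronglyMeasurable (Z k) μ :=
    ((hZ k).mono (ℱ.le _)).aestronglyMeasurable
  have hsq : (√n)⁻¹ ^ 2 = (n : ℝ)⁻¹ := by rw [inv_pow, Real.sq_sqrt n.cast_nonneg]
  have hcard_sq : n * ((√n)⁻¹ * (|t| * C)) ^ 2 = (|t| * C) ^ 2 := by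
    rw [mul_pow, hsq, mul_inv_cancel_left₀ (Nat.cast_ne_zero.2 hn)]
  have hcard_cube : n * ((√n)⁻¹ * (|t| * C)) ^ 3 = (|t| * C) ^ 2 * ((√n)⁻¹ * (|t| * C)) := by
    rw [pow_succ, ← mul_assoc, hcard_sq]
  have hscaled_bdd (k : ℕ) : ∀ᵐ ω ∂μ, |((√n)⁻¹ * t) * Z k ω| ≤ (√n)⁻¹ * (|t| * C) := by
    filter_upwards [hbdd k] with ω hω
    rw [abs_mul, abs_mul, abs_of_nonneg (by positivity : 0 ≤ (√n)⁻¹), mul_assoc]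
    gcongr
  have hscaled_cond (k : ℕ) : μ[((√n)⁻¹ * t) • Z k | ℱ k] =ᵐ[μ] 0 := by
    filter_upwards [condExp_smul ((√n)⁻¹ * t) (Z k) (ℱ k), hcond k] with ω hω h0
    rw [hω, Pi.smul_apply, h0, Pi.zero_apply, smul_zero]
  have hscaled_sq (ω : Ω) : ∑ k ∈ Finset.range n, ((√n)⁻¹ * t * Z k ω) ^ 2 - t ^ 2 * v
      = t ^ 2 * ((n : ℝ)⁻¹ * ∑ k ∈ Finset.range n, Z k ω ^ 2 - v) := by
    simp_rw [mul_pow, hsq, ← Finset.mul_sum]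
    ring
  have hscaled_sum (ω : Ω) : ((∑ k ∈ Finset.range n, (√n)⁻¹ * t * Z k ω : ℝ) : ℂ)
      = t * ((√n)⁻¹ * ∑ k ∈ Finset.range n, Z k ω : ℝ) := by
    rw [← Finset.mul_sum]
    push_cast
    ring
  have hbound := norm_integral_exp_sum_mul_I_sub_exp_le
    (fun k ↦ (hZ k).const_smul ((√n)⁻¹ * t)) ht hscaled_bdd hscaled_cond
    (by positivity : 0 ≤ t ^ 2 * v) n
  simp only [Pi.smul_apply, smul_eq_mul, hscaled_sq, hscaled_sum, abs_mul, abs_sq,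
    integral_const_mul, hcard_sq, hcard_cube] at hbound
  rwa [charFun_apply_real, integral_map (by fun_prop) (by fun_prop)]

theorem tendstoInDistribution_inv_sqrt_mul_sum_of_condExp_eq_zero
    {P' : Measure Ω'} [IsProbabilityMeasure P'] {Y : Ω' → ℝ} {v : ℝ≥0}
    (hY : HasLaw Y (gaussianReal 0 v) P') (hZ : ∀ n, StronglyMeasurable[ℱ (n + 1)] (Z n))
    {C : ℝ} (hbdd : ∀ n, ∀ᵐ ω ∂μ, |Z n ω| ≤ C) (hcond : ∀ n, μ[Z n | ℱ n] =ᵐ[μ] 0)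
    (hvar : Tendsto (fun n : ℕ ↦ ∫ ω, |(n : ℝ)⁻¹ * ∑ k ∈ Finset.range n, Z k ω ^ 2 - v| ∂μ)
      atTop (𝓝 0)) :
    TendstoInDistribution (fun (n : ℕ) ω ↦ (√n)⁻¹ * ∑ k ∈ Finset.range n, Z k ω) atTop Y
      (fun _ ↦ μ) P' where
  forall_aemeasurable n := .const_mul (Finset.aemeasurable_fun_sum _ fun k _ ↦
    ((hZ k).mono (ℱ.le _)).measurable.aemeasurable) _
  aemeasurable_limit := hY.aemeasurable
  tendsto := by
    refine ProbabilityMeasure.tendsto_iff_tendsto_charFun.2 fun t ↦ ?_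
    have hlimit : charFun (P'.map Y) t = Real.exp (-(t ^ 2 * v / 2)) := by
      rw [hY.map_eq, charFun_gaussianReal]
      push_cast
      ring_nf
    have hscale : Tendsto (fun n : ℕ ↦ (√n)⁻¹ * (|t| * C)) atTop (𝓝 0) := by
      rw [← zero_mul (|t| * C)]
      exact (tendsto_inv_atTop_zero.comp
        (Real.tendsto_sqrt_atTop.comp tendsto_natCast_atTop_atTop)).mul_const _
    have hbound : Tendsto (fun n : ℕ ↦ 2 * ((|t| * C) ^ 2 * ((√n)⁻¹ * (|t| * C))) +
        Real.exp ((|t| * C) ^ 2 / 2) *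
          (t ^ 2 * ∫ ω, |(n : ℝ)⁻¹ * ∑ k ∈ Finset.range n, Z k ω ^ 2 - v| ∂μ)) atTop (𝓝 0) := by
      simpa using ((hscale.const_mul _).const_mul 2).add ((hvar.const_mul (t ^ 2)).const_mul _)
    simp only [ProbabilityMeasure.coe_mk, hlimit]
    refine tendsto_iff_norm_sub_tendsto_zero.2
      (squeeze_zero' (.of_forall fun _ ↦ norm_nonneg _) ?_ hbound)
    filter_upwards [hscale.eventually_le_const zero_lt_one, eventually_ne_atTop 0] with n ht hn
    exact norm_charFun_inv_sqrt_mul_sum_sub_exp_le hZ hbdd hcond v.2 hn ht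

end MartingaleCLT

section CovarianceInequality

variable {Ω : Type*} {m m' m₀ : MeasurableSpace Ω} {μ : Measure Ω} {f g h : Ω → ℝ} {A B ε : ℝ}

/-- Since `f` sees `h` only through `μ[h | m]`, the worst case puts all the mass of `f` on the event
`{0 ≤ μ[h | m]}`, which belongs to `m`. -/
lemma integral_mul_le_of_forall_setIntegral_le [IsFiniteMeasure μ] (hm : m ≤ m₀)
    (hf : StronglyMeasurable[m] f) (hfA : ∀ᵐ ω ∂μ, f ω ∈ Set.Icc 0 A) (hh : Integrable h μ)
    (hε : ∀ G, MeasurableSet[m] G → ∫ ω in G, h ω ∂μ ≤ ε) (hA : 0 ≤ A) :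
    ∫ ω, f ω * h ω ∂μ ≤ A * ε := by
  set G : Set Ω := {ω | 0 ≤ μ[h | m] ω}
  have hG : MeasurableSet[m] G :=
    stronglyMeasurable_zero.measurableSet_le stronglyMeasurable_condExp
  have hf_norm : ∀ᵐ ω ∂μ, ‖f ω‖ ≤ A := by
    filter_upwards [hfA] with ω hω
    exact abs_le.2 ⟨by linarith [hω.1], hω.2⟩
  have hf_meas := (hf.mono hm).aestronglyMeasurable (μ := μ)
  have hfh : Integrable (f * h) μ := hh.bdd_mul hf_meas hf_norm
  have hle : ∀ᵐ ω ∂μ, f ω * μ[h | m] ω ≤ A * G.indicator μ[h | m] ω := by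
    filter_upwards [hfA] with ω hω
    by_cases hωG : ω ∈ G
    · rw [Set.indicator_of_mem hωG]
      exact mul_le_mul_of_nonneg_right hω.2 hωG
    · rw [Set.indicator_of_notMem hωG, mul_zero]
      exact mul_nonpos_of_nonneg_of_nonpos hω.1 (not_le.1 hωG).le
  calc ∫ ω, f ω * h ω ∂μ = ∫ ω, μ[f * h | m] ω ∂μ := (integral_condExp hm).symm
    _ = ∫ ω, f ω * μ[h | m] ω ∂μ :=
      integral_congr_ae (condExp_mul_of_aestronglyMeasurable_left hf.aestronglyMeasurable hfh hh)
    _ ≤ ∫ ω, A * G.indicator μ[h | m] ω ∂μ :=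
      integral_mono_ae (integrable_condExp.bdd_mul hf_meas hf_norm)
        ((integrable_condExp.indicator (hm _ hG)).const_mul A) hle
    _ = A * ∫ ω in G, h ω ∂μ := by
      rw [integral_const_mul, integral_indicator (hm _ hG), setIntegral_condExp hm hh hG]
    _ ≤ A * ε := mul_le_mul_of_nonneg_left (hε G hG) hA

lemma abs_integral_mul_le_of_forall_abs_setIntegral_le [IsFiniteMeasure μ] (hm : m ≤ m₀)
    (hf : StronglyMeasurable[m] f) (hfA : ∀ᵐ ω ∂μ, f ω ∈ Set.Icc 0 A) (hh : Integrable h μ)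
    (hε : ∀ G, MeasurableSet[m] G → |∫ ω in G, h ω ∂μ| ≤ ε) (hA : 0 ≤ A) :
    |∫ ω, f ω * h ω ∂μ| ≤ A * ε := by
  refine abs_le'.2 ⟨integral_mul_le_of_forall_setIntegral_le hm hf hfA hh
    (fun G hG ↦ (abs_le'.1 (hε G hG)).1) hA, ?_⟩
  rw [← integral_neg]
  simp_rw [← mul_neg]
  refine integral_mul_le_of_forall_setIntegral_le hm hf hfA hh.neg (fun G hG ↦ ?_) hA
  simpa only [Pi.neg_apply, integral_neg] using (abs_le'.1 (hε G hG)).2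

lemma covariance_eq_integral_mul_sub [IsProbabilityMeasure μ] (hf : MemLp f 2 μ)
    (hh : MemLp h 2 μ) : cov[f, h; μ] = ∫ ω, f ω * (h ω - μ[h]) ∂μ := by
  have hh_int : Integrable h μ := hh.integrable one_le_two
  have hcentered : ∫ ω, (h ω - μ[h]) ∂μ = 0 := by
    rw [integral_sub hh_int (integrable_const _)]
    simp
  have hcentered_memLp : MemLp (fun ω ↦ h ω - μ[h]) 2 μ := hh.sub (memLp_const _)
  rw [← covariance_sub_const_right hh_int μ[h], covariance_eq_sub hf hcentered_memLp, hcentered,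
    mul_zero, sub_zero]
  rfl

lemma memLp_indicator_one [IsFiniteMeasure μ] {G : Set Ω} (hG : MeasurableSet G) {p : ℝ≥0∞} :
    MemLp (G.indicator (1 : Ω → ℝ)) p μ :=
  memLp_indicator_const p hG 1 (.inr (measure_ne_top _ _))

lemma abs_covariance_le_of_forall_abs_covariance_indicator_le [IsProbabilityMeasure μ]
    (hm : m ≤ m₀) (hf : StronglyMeasurable[m] f) (hfA : ∀ᵐ ω ∂μ, f ω ∈ Set.Icc 0 A)
    (hh : MemLp h 2 μ) (hε : ∀ G, MeasurableSet[m] G → |cov[G.indicator 1, h; μ]| ≤ ε) :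
    |cov[f, h; μ]| ≤ A * ε := by
  rw [covariance_eq_integral_mul_sub (memLp_of_bounded hfA (hf.mono hm).aestronglyMeasurable 2) hh]
  refine abs_integral_mul_le_of_forall_abs_setIntegral_le hm hf hfA
    ((hh.integrable one_le_two).sub (integrable_const _)) (fun G hG ↦ ?_)
    (hfA.exists.elim fun _ hω ↦ hω.1.trans hω.2)
  convert hε G hG using 2
  rw [covariance_eq_integral_mul_sub (memLp_indicator_one (hm _ hG)) hh,
    ← integral_indicator (hm _ hG)]
  refine integral_congr_ae (ae_of_all _ fun ω ↦ ?_)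
  by_cases hω : ω ∈ G <;> simp [hω]

lemma abs_covariance_le_of_forall_abs_measureReal_inter_sub_le [IsProbabilityMeasure μ]
    (hm : m ≤ m₀) (hm' : m' ≤ m₀)
    (hε : ∀ G H, MeasurableSet[m] G → MeasurableSet[m'] H →
      |μ.real (G ∩ H) - μ.real G * μ.real H| ≤ ε)
    (hf : StronglyMeasurable[m] f) (hfA : ∀ᵐ ω ∂μ, f ω ∈ Set.Icc 0 A)
    (hg : StronglyMeasurable[m'] g) (hgB : ∀ᵐ ω ∂μ, g ω ∈ Set.Icc 0 B) :
    |cov[f, g; μ]| ≤ A * (B * ε) := by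
  refine abs_covariance_le_of_forall_abs_covariance_indicator_le hm hf hfA
    (memLp_of_bounded hgB (hg.mono hm').aestronglyMeasurable 2) fun G hG ↦ ?_
  rw [covariance_comm]
  refine abs_covariance_le_of_forall_abs_covariance_indicator_le hm' hg hgB
    (memLp_indicator_one (hm _ hG)) fun H hH ↦ ?_
  rw [covariance_comm,
    covariance_eq_sub (memLp_indicator_one (hm _ hG)) (memLp_indicator_one (hm' _ hH)),
    ← Set.inter_indicator_one, integral_indicator_one (hm _ hG),
    integral_indicator_one (hm' _ hH), integral_indicator_one ((hm _ hG).inter (hm' _ hH))]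
  exact hε G H hG hH

end CovarianceInequality

section WeakLaw

variable {Ω : Type*} {mΩ : MeasurableSpace Ω} {μ : Measure Ω} [IsProbabilityMeasure μ]

lemma integral_abs_sub_integral_le_sqrt_variance {X : Ω → ℝ} (hX : MemLp X 2 μ) :
    ∫ ω, |X ω - μ[X]| ∂μ ≤ √(Var[X; μ]) := by
  refine Real.le_sqrt_of_sq_le ?_
  have habs : MemLp (fun ω ↦ |X ω - μ[X]|) 2 μ := (hX.sub (memLp_const _)).abs
  have hvar := variance_nonneg (fun ω ↦ |X ω - μ[X]|) μ
  rw [variance_eq_sub habs] at hvar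
  simpa [variance_eq_integral hX.aemeasurable, sq_abs] using hvar

variable {Y : ℕ → Ω → ℝ} {a : ℕ → ℝ}

lemma variance_sum_range_le (hY : ∀ n, MemLp (Y n) 2 μ)
    (hcov : ∀ t m, |cov[Y t, Y (t + m); μ]| ≤ a m) (n : ℕ) :
    Var[∑ k ∈ Finset.range n, Y k; μ] ≤ 2 * n * ∑ m ∈ Finset.range n, a m := by
  induction n with
  | zero => simp
  | succ n ih =>
    have ha (m : ℕ) : 0 ≤ a m := (abs_nonneg _).trans (hcov 0 m)
    have hvar : Var[Y n; μ] ≤ a 0 := by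
      rw [← covariance_self (hY n).aemeasurable]
      exact (le_abs_self _).trans (hcov n 0)
    have hcross : cov[∑ k ∈ Finset.range n, Y k, Y n; μ] ≤ ∑ m ∈ Finset.range n, a (m + 1) := by
      rw [covariance_sum_left' (fun k _ ↦ hY k) (hY n), ← Finset.sum_range_reflect]
      refine Finset.sum_le_sum fun k hk ↦ (le_abs_self _).trans ?_
      obtain ⟨d, rfl⟩ := Nat.exists_eq_add_of_lt (Finset.mem_range.1 hk)
      simpa [add_assoc, add_comm, add_left_comm] using hcov d (k + 1)
    have hmono : ∑ m ∈ Finset.range n, a m ≤ ∑ m ∈ Finset.range (n + 1), a m :=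
      Finset.sum_le_sum_of_subset_of_nonneg (Finset.range_mono n.le_succ) fun m _ _ ↦ ha m
    rw [Finset.sum_range_succ, variance_add (memLp_finsetSum' _ fun k _ ↦ hY k) (hY n)]
    calc Var[∑ k ∈ Finset.range n, Y k; μ] + 2 * cov[∑ k ∈ Finset.range n, Y k, Y n; μ]
          + Var[Y n; μ]
        ≤ 2 * n * ∑ m ∈ Finset.range n, a m
          + 2 * (∑ m ∈ Finset.range n, a (m + 1) + a 0) := by linarith [ha 0]
      _ = 2 * n * ∑ m ∈ Finset.range n, a m + 2 * ∑ m ∈ Finset.range (n + 1), a m := by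
        rw [Finset.sum_range_succ']
      _ ≤ 2 * n * ∑ m ∈ Finset.range (n + 1), a m + 2 * ∑ m ∈ Finset.range (n + 1), a m := by
        gcongr
      _ = 2 * (n + 1 : ℕ) * ∑ m ∈ Finset.range (n + 1), a m := by push_cast; ring

lemma tendsto_integral_abs_average_sub (hY : ∀ n, MemLp (Y n) 2 μ) {c : ℝ}
    (hmean : ∀ n, μ[Y n] = c) (hcov : ∀ t m, |cov[Y t, Y (t + m); μ]| ≤ a m)
    (ha : Tendsto a atTop (𝓝 0)) :
    Tendsto (fun n : ℕ ↦ ∫ ω, |(n : ℝ)⁻¹ * ∑ k ∈ Finset.range n, Y k ω - c| ∂μ) atTop (𝓝 0) := by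
  have hbound : Tendsto (fun n : ℕ ↦ √(2 * ((n : ℝ)⁻¹ * ∑ m ∈ Finset.range n, a m))) atTop
      (𝓝 0) := by
    simpa using (ha.cesaro.const_mul 2).sqrt
  refine squeeze_zero' (.of_forall fun n ↦ integral_nonneg fun ω ↦ abs_nonneg _) ?_ hbound
  filter_upwards [eventually_ne_atTop 0] with n hn
  have hn' : (n : ℝ) ≠ 0 := Nat.cast_ne_zero.2 hn
  have hmem : MemLp (fun ω ↦ (n : ℝ)⁻¹ * (∑ k ∈ Finset.range n, Y k) ω) 2 μ :=
    (memLp_finsetSum' _ fun k _ ↦ hY k).const_mul _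
  have hmean_avg : ∫ ω, (n : ℝ)⁻¹ * (∑ k ∈ Finset.range n, Y k) ω ∂μ = c := by
    simp_rw [Finset.sum_apply]
    rw [integral_const_mul, integral_finsetSum _ fun k _ ↦ (hY k).integrable one_le_two]
    simp [hmean, hn']
  have hL1 := integral_abs_sub_integral_le_sqrt_variance hmem
  rw [hmean_avg] at hL1
  simp only [Finset.sum_apply] at hL1
  refine hL1.trans (Real.sqrt_le_sqrt ?_)
  simp_rw [← Finset.sum_apply]
  rw [variance_const_mul]
  refine (mul_le_mul_of_nonneg_left (variance_sum_range_le hY hcov n) (sq_nonneg _)).trans_eq ?_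
  field_simp

end WeakLaw

section ConditionalDistribution

variable {Ω α β γ δ : Type*} {mΩ : MeasurableSpace Ω} {mα : MeasurableSpace α}
  {mβ : MeasurableSpace β} {mγ : MeasurableSpace γ} {mδ : MeasurableSpace δ}

lemma map_compProd_eq_bind_map (μ : Measure α) [SFinite μ] (κ : Kernel α β) [IsSFiniteKernel κ]
    {f : α × β → γ} (hf : Measurable f) :
    (μ ⊗ₘ κ).map f = μ.bind fun a ↦ (κ a).map fun b ↦ f (a, b) := by
  rw [Measure.compProd_eq_comp_prod, Measure.map_comp μ _ hf]
  congr with a : 1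
  rw [Kernel.map_apply _ hf, Kernel.prod_apply, Kernel.id_apply, Measure.dirac_prod,
    Measure.map_map hf measurable_prodMk_left]
  rfl

lemma compProd_eq_bind_map_prodMk (μ : Measure α) [SFinite μ] (κ : Kernel α β)
    [IsSFiniteKernel κ] : μ ⊗ₘ κ = μ.bind fun a ↦ (κ a).map (Prod.mk a) := by
  simpa using map_compProd_eq_bind_map μ κ measurable_id

lemma map_kernel_compProd_apply_eq_bind_map (κ : Kernel α β) [IsSFiniteKernel κ]
    (η : Kernel (α × β) γ) [IsSFiniteKernel η] (a : α) {f : β × γ → δ} (hf : Measurable f) :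
    ((κ ⊗ₖ η) a).map f = (κ a).bind fun b ↦ (η (a, b)).map fun c ↦ f (b, c) := by
  rw [Kernel.compProd_apply_eq_compProd_sectR, map_compProd_eq_bind_map _ _ hf]
  rfl

lemma compProd_compProd_eq_bind_bind_map (μ : Measure α) [SFinite μ] (κ : Kernel α β)
    [IsSFiniteKernel κ] (η : Kernel (α × β) γ) [IsSFiniteKernel η] :
    μ ⊗ₘ (κ ⊗ₖ η) = μ.bind fun a ↦ (κ a).bind fun b ↦ (η (a, b)).map fun c ↦ (a, b, c) := by
  rw [compProd_eq_bind_map_prodMk]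
  congr with a : 1
  exact map_kernel_compProd_apply_eq_bind_map κ η a measurable_prodMk_left

variable {μ : Measure Ω} {X : Ω → α} {Y : Ω → β} {Z : Ω → γ} {κ : Kernel α β}

lemma hasCondDistrib_prodMk_compProd [SFinite μ] [IsSFiniteKernel κ] {η : Kernel (α × β) γ}
    [IsSFiniteKernel η] (hY : HasCondDistrib Y X κ μ)
    (hZ : HasCondDistrib Z (fun ω ↦ (X ω, Y ω)) η μ) :
    HasCondDistrib (fun ω ↦ (Y ω, Z ω)) X (κ ⊗ₖ η) μ where
  aemeasurable := hY.aemeasurable_fst.prodMk (hY.aemeasurable_snd.prodMk hZ.aemeasurable_snd)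
  map_eq := by
    have hXYZ : HasLaw (fun ω ↦ ((X ω, Y ω), Z ω)) (μ.map X ⊗ₘ κ ⊗ₘ η) μ :=
      HasLaw.prodMk_of_hasCondDistrib hY hZ
    rw [← Measure.compProd_assoc', ← hXYZ.map_eq,
      AEMeasurable.map_map_of_aemeasurable (by fun_prop) hXYZ.aemeasurable]
    rfl

lemma condExp_comap_ae_eq_integral_of_hasCondDistrib [IsFiniteMeasure μ] [IsSFiniteKernel κ]
    {E : Type*} [NormedAddCommGroup E] [NormedSpace ℝ E] [CompleteSpace E]
    (h : HasCondDistrib Y X κ μ) (hX : Measurable X) {f : α × β → E} (hf : StronglyMeasurable f)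
    (hint : Integrable (fun ω ↦ f (X ω, Y ω)) μ) :
    μ[fun ω ↦ f (X ω, Y ω) | mα.comap X] =ᵐ[μ] fun ω ↦ ∫ y, f (X ω, y) ∂(κ (X ω)) := by
  have hf_int : Integrable f (μ.map X ⊗ₘ κ) := by
    rw [← h.map_eq]
    exact (integrable_map_measure hf.aestronglyMeasurable h.aemeasurable).2 hint
  have hmeas : StronglyMeasurable fun x ↦ ∫ y, f (x, y) ∂(κ x) := hf.integral_kernel_prod_right'
  have hint' : Integrable (fun ω ↦ ∫ y, f (X ω, y) ∂(κ (X ω))) μ :=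
    (integrable_map_measure hmeas.aestronglyMeasurable hX.aemeasurable).1
      (by simpa using hf_int.integral_compProd)
  refine (ae_eq_condExp_of_forall_setIntegral_eq hX.comap_le hint
    (fun _ _ _ ↦ hint'.integrableOn) ?_
    (hmeas.comp_measurable (comap_measurable X)).aestronglyMeasurable).symm
  rintro _ ⟨U, hU, rfl⟩ -
  calc ∫ ω in X ⁻¹' U, ∫ y, f (X ω, y) ∂(κ (X ω)) ∂μ
      = ∫ x in U, ∫ y, f (x, y) ∂(κ x) ∂(μ.map X) :=
        (setIntegral_map hU hmeas.aestronglyMeasurable hX.aemeasurable).symm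
    _ = ∫ p in U ×ˢ Set.univ, f p ∂(μ.map X ⊗ₘ κ) := by
        rw [Measure.setIntegral_compProd hU .univ hf_int.integrableOn]
        simp
    _ = ∫ ω in (fun ω ↦ (X ω, Y ω)) ⁻¹' U ×ˢ Set.univ, f (X ω, Y ω) ∂μ := by
        rw [← h.map_eq, setIntegral_map (hU.prod .univ) hf.aestronglyMeasurable h.aemeasurable]
    _ = ∫ ω in X ⁻¹' U, f (X ω, Y ω) ∂μ := by
        congr 2
        ext ω
        simp

end ConditionalDistribution

section Trajectory

variable {P : Kernel (S × A) S} {R : Kernel (S × A) ℝ} {πb : Kernel S A}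
  {μb : Measure S}

/-- The joint conditional law of the action, the reward and the next state given the current state,
when actions are drawn from `πb`. -/
def transitionKernel (P : Kernel (S × A) S) (R : Kernel (S × A) ℝ) (πb : Kernel S A) :
    Kernel S (A × ℝ × S) :=
  πb ⊗ₖ (R ×ₖ P)

/-- The conditional law of the time-`n + 1` state, action and reward given the first `n + 1`
state-action-reward triples. -/
def nextTripleKernel (P : Kernel (S × A) S) (R : Kernel (S × A) ℝ) (πb : Kernel S A) (n : ℕ) :
    Kernel (Fin (n + 1) → S × A × ℝ) (S × A × ℝ) :=
  P.comap (fun p ↦ ((p (Fin.last n)).1, (p (Fin.last n)).2.1)) (by fun_prop) ⊗ₖ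
    Kernel.prodMkLeft _ (πb ⊗ₖ R)

instance [IsMarkovKernel P] [IsMarkovKernel R] [IsMarkovKernel πb] :
    IsMarkovKernel (transitionKernel P R πb) := by
  unfold transitionKernel
  infer_instance

instance [IsMarkovKernel P] [IsMarkovKernel R] [IsMarkovKernel πb] (n : ℕ) :
    IsMarkovKernel (nextTripleKernel P R πb n) := by
  unfold nextTripleKernel
  infer_instance

variable [IsMarkovKernel P] [IsMarkovKernel R] [IsMarkovKernel πb]

lemma initLaw_eq_compProd [SFinite μb] : initLaw R πb μb = μb ⊗ₘ (πb ⊗ₖ R) :=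
  (compProd_compProd_eq_bind_bind_map μb πb R).symm

lemma stepLaw_eq_nextTripleKernel {n : ℕ} (p : Fin (n + 1) → S × A × ℝ) :
    stepLaw P R πb (p (Fin.last n)) = nextTripleKernel P R πb n p := by
  rw [nextTripleKernel, Kernel.compProd_apply_eq_compProd_sectR]
  exact (compProd_compProd_eq_bind_bind_map _ πb R).symm

lemma dataLaw_eq_compProd [SFinite μb] : dataLaw P R πb μb = μb ⊗ₘ transitionKernel P R πb := by
  rw [transitionKernel, compProd_compProd_eq_bind_bind_map]
  unfold dataLaw
  congr with s : 1
  congr with a : 1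
  rw [Kernel.prod_apply, ← Measure.compProd_const, map_compProd_eq_bind_map _ _ (by fun_prop)]
  simp only [Kernel.const_apply]

lemma map_dataLaw_nextState [SFinite μb] :
    (dataLaw P R πb μb).map (fun x ↦ x.2.2.2) = stateKernel P πb ∘ₘ μb := by
  calc (dataLaw P R πb μb).map (fun x ↦ x.2.2.2)
      = (μb ⊗ₘ πb ⊗ₘ (R ×ₖ P)).snd.snd := by
        rw [dataLaw_eq_compProd, transitionKernel, ← Measure.compProd_assoc',
          Measure.map_map (by fun_prop) (by fun_prop), Measure.snd, Measure.snd,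
          Measure.map_map (by fun_prop) (by fun_prop)]
        rfl
    _ = P ∘ₘ (μb ⊗ₘ πb) := by
        rw [Measure.snd_compProd, Measure.snd, Measure.map_comp _ _ measurable_snd, ← Kernel.snd_eq,
          Kernel.snd_prod]
    _ = stateKernel P πb ∘ₘ μb := by
        rw [Measure.compProd_eq_comp_prod, Measure.comp_assoc, stateKernel]

end Trajectory

section TrajectoryLaw

variable {P : Kernel (S × A) S} {R : Kernel (S × A) ℝ} {πb : Kernel S A} {μb : Measure S}
  {Pb : Measure (ℕ → S × A × ℝ)}

/-- `Pb` is the law of a trajectory started from `μb` and driven by the policy `πb`, specified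
through its finite prefixes. -/
def IsTrajectoryLaw (P : Kernel (S × A) S) (R : Kernel (S × A) ℝ) (πb : Kernel S A)
    (μb : Measure S) (Pb : Measure (ℕ → S × A × ℝ)) : Prop :=
  ∀ n, Pb.map (fun ω ↦ fun i : Fin (n + 1) ↦ ω i) = finLaw P R πb μb n

/-- The trajectory up to the state at time `n`, that is, before the action at time `n`. -/
def history (n : ℕ) (ω : ℕ → S × A × ℝ) : (Fin n → S × A × ℝ) × S :=
  (fun i ↦ ω i, (ω n).1)

lemma measurable_history (n : ℕ) : Measurable (history (S := S) (A := A) n) := by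
  unfold history
  fun_prop

lemma measurable_fin_snoc {E : Type*} [MeasurableSpace E] (n : ℕ) :
    Measurable fun x : (Fin n → E) × E ↦ (Fin.snoc x.1 x.2 : Fin (n + 1) → E) := by
  refine measurable_pi_iff.2 fun i ↦ ?_
  cases i using Fin.lastCases with
  | last => simpa only [Fin.snoc_last] using measurable_snd
  | cast i =>
    simp only [Fin.snoc_castSucc]
    fun_prop

variable [IsMarkovKernel R] [IsMarkovKernel πb]

lemma IsTrajectoryLaw.hasLaw_zero (h : IsTrajectoryLaw P R πb μb Pb) [SFinite μb] :
    HasLaw (fun ω ↦ ω 0) (μb ⊗ₘ (πb ⊗ₖ R)) Pb where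
  aemeasurable := (measurable_pi_apply 0).aemeasurable
  map_eq := by
    have h0 := congr_arg (Measure.map fun p ↦ p 0) (h 0)
    rwa [finLaw, Measure.map_map (by fun_prop) (by fun_prop), Measure.map_map (by fun_prop)
      (by fun_prop), initLaw_eq_compProd, Function.comp_def, Function.comp_def, Measure.map_id']
      at h0

lemma IsTrajectoryLaw.hasLaw_state_zero (h : IsTrajectoryLaw P R πb μb Pb) [SFinite μb] :
    HasLaw (fun ω ↦ (ω 0).1) μb Pb := by
  have hfst := HasLaw.fun_comp ⟨measurable_fst.aemeasurable, rfl⟩ h.hasLaw_zero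
  rwa [← Measure.fst, Measure.fst_compProd] at hfst

variable [IsMarkovKernel P]

lemma map_assoc_compProd_eq_prodMkLeft_transitionKernel {E : Type*} [MeasurableSpace E] :
    (Kernel.prodMkLeft E (πb ⊗ₖ R) ⊗ₖ P.comap (fun x ↦ (x.1.2, x.2.1)) (by fun_prop)).map
        MeasurableEquiv.prodAssoc = Kernel.prodMkLeft E (transitionKernel P R πb) := by
  ext x : 1
  rw [Kernel.map_apply _ (MeasurableEquiv.measurable _), Kernel.prodMkLeft_apply,
    transitionKernel, Kernel.compProd_apply_eq_compProd_sectR,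
    Kernel.compProd_apply_eq_compProd_sectR, Kernel.prodMkLeft_apply,
    Kernel.compProd_apply_eq_compProd_sectR, Measure.compProd_assoc']
  congr 1
  ext a s hs
  rw [Kernel.sectR_apply, Kernel.compProd_apply hs, Kernel.prod_apply' _ _ _ hs]
  rfl

lemma IsTrajectoryLaw.hasCondDistrib_succ [IsFiniteMeasure Pb] (h : IsTrajectoryLaw P R πb μb Pb)
    (n : ℕ) :
    HasCondDistrib (fun ω ↦ ω (n + 1)) (fun ω ↦ fun i : Fin (n + 1) ↦ ω i)
      (nextTripleKernel P R πb n) Pb where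
  map_eq := by
    have hsplit : Measurable fun p : Fin (n + 2) → S × A × ℝ ↦
        (Fin.init p, p (Fin.last (n + 1))) := by
      unfold Fin.init
      fun_prop
    set ν := Pb.map fun ω ↦ fun i : Fin (n + 1) ↦ ω i
    have hsucc : Pb.map (fun ω ↦ fun i : Fin (n + 2) ↦ ω i) =
        (ν ⊗ₘ nextTripleKernel P R πb n).map fun x ↦ Fin.snoc x.1 x.2 := by
      rw [h (n + 1), map_compProd_eq_bind_map _ _ (measurable_fin_snoc (n + 1)), finLaw, ← h n]
      simp only [stepLaw_eq_nextTripleKernel, ν]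
    calc Pb.map (fun ω ↦ (fun i : Fin (n + 1) ↦ ω i, ω (n + 1)))
        = (Pb.map fun ω ↦ fun i : Fin (n + 2) ↦ ω i).map
            fun p ↦ (Fin.init p, p (Fin.last (n + 1))) := by
          rw [Measure.map_map hsplit (by fun_prop)]
          rfl
      _ = ν ⊗ₘ nextTripleKernel P R πb n := by
          rw [hsucc, Measure.map_map hsplit (measurable_fin_snoc _)]
          simp [Function.comp_def]

lemma IsTrajectoryLaw.hasCondDistrib_state_succ [IsFiniteMeasure Pb]
    (h : IsTrajectoryLaw P R πb μb Pb) (n : ℕ) :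
    HasCondDistrib (fun ω ↦ (ω (n + 1)).1) (fun ω ↦ (history n ω, (ω n).2))
      (P.comap (fun x ↦ (x.1.2, x.2.1)) (by fun_prop)) Pb := by
  have hfst := (h.hasCondDistrib_succ n).fst
  rw [nextTripleKernel, Kernel.fst_compProd] at hfst
  exact HasCondDistrib.comp_right (κ := P.comap (fun x ↦ (x.1.2, x.2.1)) (by fun_prop))
    (f := fun p : Fin (n + 1) → S × A × ℝ ↦
      ((fun i : Fin n ↦ p i.castSucc, (p (Fin.last n)).1), (p (Fin.last n)).2))
    (hf := by fun_prop) hfst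

lemma IsTrajectoryLaw.hasCondDistrib_action_reward [IsFiniteMeasure Pb] [SFinite μb]
    (h : IsTrajectoryLaw P R πb μb Pb) (n : ℕ) :
    HasCondDistrib (fun ω ↦ (ω n).2) (history n) (Kernel.prodMkLeft _ (πb ⊗ₖ R)) Pb := by
  cases n with
  | zero =>
    have h0 : HasCondDistrib (fun ω ↦ (ω 0).2) (fun ω ↦ (ω 0).1) (πb ⊗ₖ R) Pb := by
      rw [HasCondDistrib, h.hasLaw_state_zero.map_eq]
      exact h.hasLaw_zero
    have hhist : history 0 = (fun s : S ↦ ((Fin.elim0 : Fin 0 → S × A × ℝ), s)) ∘ fun ω ↦ (ω 0).1 :=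
      funext fun ω ↦ Prod.ext (Subsingleton.elim _ _) rfl
    rw [hhist]
    exact HasCondDistrib.comp_right (hf := by fun_prop) h0
  | succ n => exact (h.hasCondDistrib_succ n).of_compProd

lemma IsTrajectoryLaw.hasCondDistrib_transition [IsFiniteMeasure Pb] [SFinite μb]
    (h : IsTrajectoryLaw P R πb μb Pb) (n : ℕ) :
    HasCondDistrib (fun ω ↦ (Xt n ω).2) (history n)
      (Kernel.prodMkLeft _ (transitionKernel P R πb)) Pb := by
  rw [← map_assoc_compProd_eq_prodMkLeft_transitionKernel]
  exact (hasCondDistrib_prodMk_compProd (h.hasCondDistrib_action_reward n)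
    (h.hasCondDistrib_state_succ n)).comp_left MeasurableEquiv.prodAssoc.measurable

lemma IsTrajectoryLaw.hasCondDistrib_transition_state [IsFiniteMeasure Pb] [SFinite μb]
    (h : IsTrajectoryLaw P R πb μb Pb) (n : ℕ) :
    HasCondDistrib (fun ω ↦ (Xt n ω).2) (fun ω ↦ (ω n).1) (transitionKernel P R πb) Pb :=
  HasCondDistrib.comp_right (f := Prod.snd) (hf := measurable_snd) (h.hasCondDistrib_transition n)

lemma IsTrajectoryLaw.hasLaw_state [IsFiniteMeasure Pb] [SFinite μb]
    (h : IsTrajectoryLaw P R πb μb Pb) (hstat : stateKernel P πb ∘ₘ μb = μb) (n : ℕ) :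
    HasLaw (fun ω ↦ (ω n).1) μb Pb := by
  induction n with
  | zero => exact h.hasLaw_state_zero
  | succ n ih =>
    have hlaw := ih.prodMk_of_hasCondDistrib (h.hasCondDistrib_transition_state n)
    rw [← dataLaw_eq_compProd] at hlaw
    exact HasLaw.fun_comp (Y := fun x ↦ x.2.2.2)
      ⟨by fun_prop, map_dataLaw_nextState.trans hstat⟩ hlaw

lemma IsTrajectoryLaw.hasLaw_Xt [IsFiniteMeasure Pb] [SFinite μb]
    (h : IsTrajectoryLaw P R πb μb Pb) (hstat : stateKernel P πb ∘ₘ μb = μb) (n : ℕ) :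
    HasLaw (Xt n) (dataLaw P R πb μb) Pb := by
  rw [dataLaw_eq_compProd]
  exact (h.hasLaw_state hstat n).prodMk_of_hasCondDistrib (h.hasCondDistrib_transition_state n)

end TrajectoryLaw

section HistoryFiltration

/-- The filtration whose `n`-th term is generated by the trajectory up to the state at time `n`. -/
def historyFiltration : Filtration ℕ (MeasurableSpace.pi : MeasurableSpace (ℕ → S × A × ℝ)) where
  seq n := MeasurableSpace.comap (history n) inferInstance
  mono' := by
    refine monotone_nat_of_le_succ fun n ↦ ?_
    have hinit : Measurable fun x : (Fin (n + 1) → S × A × ℝ) × S ↦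
        (fun i : Fin n ↦ x.1 i.castSucc, (x.1 (Fin.last n)).1) := by fun_prop
    exact (hinit.comp (comap_measurable (history (n + 1)))).comap_le
  le' n := (measurable_history n).comap_le

lemma measurable_Xt_historyFiltration_succ (n : ℕ) :
    Measurable[historyFiltration (n + 1)] (Xt (S := S) (A := A) n) := by
  have hlast : Measurable fun x : (Fin (n + 1) → S × A × ℝ) × S ↦
      ((x.1 (Fin.last n)).1, (x.1 (Fin.last n)).2.1, (x.1 (Fin.last n)).2.2, x.2) := by fun_prop
  exact hlast.comp (comap_measurable (history (n + 1)))

lemma IsTrajectoryLaw.condExp_comp_Xt_eq_zero {P : Kernel (S × A) S} [IsMarkovKernel P]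
    {R : Kernel (S × A) ℝ} [IsMarkovKernel R] {πb : Kernel S A} [IsMarkovKernel πb]
    {μb : Measure S} [SFinite μb] {Pb : Measure (ℕ → S × A × ℝ)} [IsFiniteMeasure Pb]
    (h : IsTrajectoryLaw P R πb μb Pb) {z : S × A × ℝ × S → ℝ} (hz : Measurable z)
    (hzero : ∀ s, ∫ y, z (s, y) ∂(transitionKernel P R πb s) = 0) {n : ℕ}
    (hint : Integrable (fun ω ↦ z (Xt n ω)) Pb) :
    Pb[fun ω ↦ z (Xt n ω) | historyFiltration n] =ᵐ[Pb] 0 := by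
  have hcond := condExp_comap_ae_eq_integral_of_hasCondDistrib (h.hasCondDistrib_transition n)
    (measurable_history n) (f := fun x ↦ z (x.1.2, x.2))
    (hz.comp (by fun_prop)).stronglyMeasurable hint
  simp only [Kernel.prodMkLeft_apply, hzero] at hcond
  exact hcond

end HistoryFiltration

section AlphaMixing

lemma measurable_Xt (t : ℕ) : Measurable (Xt (S := S) (A := A) t) := by
  unfold Xt
  fun_prop

lemma pastSA_le (t : ℕ) : pastSA (S := S) (A := A) t ≤ MeasurableSpace.pi :=
  iSup_le fun i ↦ (measurable_Xt i).comap_le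

lemma futureSA_le (t : ℕ) : futureSA (S := S) (A := A) t ≤ MeasurableSpace.pi :=
  iSup_le fun i ↦ (measurable_Xt (t + i)).comap_le

lemma measurable_Xt_pastSA (t : ℕ) : Measurable[pastSA t] (Xt (S := S) (A := A) t) :=
  measurable_iff_comap_le.2 <|
    le_iSup (fun i : Fin (t + 1) ↦ MeasurableSpace.comap (Xt (S := S) (A := A) i) inferInstance)
      (Fin.last t)

lemma measurable_Xt_futureSA (t : ℕ) : Measurable[futureSA t] (Xt (S := S) (A := A) t) :=
  measurable_iff_comap_le.2 <|
    le_iSup (fun i : ℕ ↦ MeasurableSpace.comap (Xt (S := S) (A := A) (t + i)) inferInstance) 0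

variable {Pb : Measure (ℕ → S × A × ℝ)} [IsProbabilityMeasure Pb]

lemma abs_measureReal_inter_sub_le_alphaMix {t m : ℕ} {G H : Set (ℕ → S × A × ℝ)}
    (hG : MeasurableSet[pastSA t] G) (hH : MeasurableSet[futureSA (t + m)] H) :
    |Pb.real (G ∩ H) - Pb.real G * Pb.real H| ≤ alphaMix Pb m := by
  refine le_csSup ⟨1, ?_⟩ ⟨t, G, H, hG, hH, rfl⟩
  rintro _ ⟨t, G, H, -, -, rfl⟩
  exact abs_sub_le_of_nonneg_of_le measureReal_nonneg measureReal_le_one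
    (mul_nonneg measureReal_nonneg measureReal_nonneg)
    (mul_le_one₀ measureReal_le_one measureReal_nonneg measureReal_le_one)

lemma abs_covariance_comp_Xt_le_alphaMix {t m : ℕ} {f g : S × A × ℝ × S → ℝ} (hf : Measurable f)
    (hg : Measurable g) {a b : ℝ} (hfa : ∀ᵐ ω ∂Pb, f (Xt t ω) ∈ Set.Icc 0 a)
    (hgb : ∀ᵐ ω ∂Pb, g (Xt (t + m) ω) ∈ Set.Icc 0 b) :
    |cov[fun ω ↦ f (Xt t ω), fun ω ↦ g (Xt (t + m) ω); Pb]| ≤ a * (b * alphaMix Pb m) :=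
  abs_covariance_le_of_forall_abs_measureReal_inter_sub_le (pastSA_le t) (futureSA_le (t + m))
    (fun _ _ hG hH ↦ abs_measureReal_inter_sub_le_alphaMix hG hH)
    (hf.comp (measurable_Xt_pastSA t)).stronglyMeasurable hfa
    (hg.comp (measurable_Xt_futureSA (t + m))).stronglyMeasurable hgb

variable {P : Kernel (S × A) S} [IsMarkovKernel P] {R : Kernel (S × A) ℝ} [IsMarkovKernel R]
  {πb : Kernel S A} [IsMarkovKernel πb] {μb : Measure S} [SFinite μb]

theorem IsTrajectoryLaw.tendstoInDistribution_inv_sqrt_mul_sum_comp_Xt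
    (h : IsTrajectoryLaw P R πb μb Pb) (hstat : stateKernel P πb ∘ₘ μb = μb)
    (hmix : Tendsto (alphaMix Pb) atTop (𝓝 0)) {z : S × A × ℝ × S → ℝ} (hz : Measurable z) {C : ℝ}
    (hbdd : ∀ᵐ x ∂(dataLaw P R πb μb), |z x| ≤ C)
    (hzero : ∀ s, ∫ y, z (s, y) ∂(transitionKernel P R πb s) = 0)
    {Ω' : Type*} {mΩ' : MeasurableSpace Ω'} {P' : Measure Ω'} [IsProbabilityMeasure P']
    {Y : Ω' → ℝ} (hY : HasLaw Y (gaussianReal 0 (∫ x, z x ^ 2 ∂(dataLaw P R πb μb)).toNNReal) P') :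
    TendstoInDistribution (fun (n : ℕ) ω ↦ (√n)⁻¹ * ∑ k ∈ Finset.range n, z (Xt k ω)) atTop Y
      (fun _ ↦ Pb) P' := by
  have hlaw n := h.hasLaw_Xt hstat n
  have hzX n : ∀ᵐ ω ∂Pb, |z (Xt n ω)| ≤ C :=
    ((hlaw n).ae_iff (by fun_prop : Measurable fun x ↦ |z x| ≤ C)).2 hbdd
  have hzX_meas n : Measurable fun ω ↦ z (Xt n ω) := hz.comp (measurable_Xt n)
  have hsq n : ∀ᵐ ω ∂Pb, z (Xt n ω) ^ 2 ∈ Set.Icc 0 (C ^ 2) := (hzX n).mono fun ω hω ↦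
    ⟨sq_nonneg _, sq_le_sq' (neg_le_of_abs_le hω) (le_of_abs_le hω)⟩
  have hsq_meas : Measurable fun x ↦ z x ^ 2 := hz.pow_const 2
  refine tendstoInDistribution_inv_sqrt_mul_sum_of_condExp_eq_zero (ℱ := historyFiltration) hY
    (fun n ↦ (hz.comp (measurable_Xt_historyFiltration_succ n)).stronglyMeasurable) hzX
    (fun n ↦ h.condExp_comp_Xt_eq_zero hz hzero <|
      .of_bound (hzX_meas n).aestronglyMeasurable C (hzX n)) ?_
  rw [Real.coe_toNNReal _ (integral_nonneg fun x ↦ sq_nonneg _)]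
  refine tendsto_integral_abs_average_sub (a := fun m ↦ C ^ 2 * (C ^ 2 * alphaMix Pb m))
    (fun n ↦ ?_) (fun n ↦ (hlaw n).integral_comp hsq_meas.aestronglyMeasurable)
    (fun t m ↦ abs_covariance_comp_Xt_le_alphaMix hsq_meas hsq_meas (hsq t) (hsq (t + m))) ?_
  · exact .of_bound ((hzX_meas n).pow_const 2).aestronglyMeasurable (C ^ 2)
      ((hsq n).mono fun ω hω ↦ (abs_of_nonneg hω.1).trans_le hω.2)
  · simpa using (hmix.const_mul (C ^ 2)).const_mul (C ^ 2)

end AlphaMixing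

section TemporalDifference

/-- The temporal-difference error `r + γ v(s') - q(s, a)` of `q` at a transition `(s, a, r, s')`,
where `v` is the state value of `q` under `πe`. -/
def tdError (γ : ℝ) (πe : Kernel S A) (q : S → A → ℝ) (x : S × A × ℝ × S) : ℝ :=
  x.2.2.1 + γ * ∫ a, q x.2.2.2 a ∂(πe x.2.2.2) - q x.1 x.2.1

variable {P : Kernel (S × A) S} [IsMarkovKernel P] {R : Kernel (S × A) ℝ} [IsMarkovKernel R]
  {πe πb : Kernel S A} [IsMarkovKernel πe] {γ Rmax C Cη : ℝ} {η q : S → A → ℝ}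

lemma abs_integral_kernel_le (hq_bdd : ∀ s a, |q s a| ≤ C) (s : S) :
    |∫ a, q s a ∂(πe s)| ≤ C := by
  simpa using norm_integral_le_of_norm_le_const (f := q s) (μ := πe s) (.of_forall (hq_bdd s))

lemma measurable_integral_kernel (hq : Measurable (Function.uncurry q)) :
    Measurable fun s ↦ ∫ a, q s a ∂(πe s) :=
  (hq.stronglyMeasurable.integral_kernel_prod_right (κ := πe)).measurable

lemma measurable_tdError (hq : Measurable (Function.uncurry q)) :
    Measurable (tdError γ πe q) := by
  have hreward : Measurable fun x : S × A × ℝ × S ↦ x.2.2.1 := by fun_prop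
  have hv : Measurable fun x : S × A × ℝ × S ↦ ∫ a, q x.2.2.2 a ∂(πe x.2.2.2) :=
    (measurable_integral_kernel hq).comp (by fun_prop)
  have hqx : Measurable fun x : S × A × ℝ × S ↦ q x.1 x.2.1 := by fun_prop
  exact (hreward.add (hv.const_mul γ)).sub hqx

lemma abs_tdError_le (hq_bdd : ∀ s a, |q s a| ≤ C) {x : S × A × ℝ × S} (hx : |x.2.2.1| ≤ Rmax) :
    |tdError γ πe q x| ≤ Rmax + |γ| * C + C := by
  have hv : |γ * ∫ a, q x.2.2.2 a ∂(πe x.2.2.2)| ≤ |γ| * C := by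
    rw [abs_mul]
    exact mul_le_mul_of_nonneg_left (abs_integral_kernel_le hq_bdd _) (abs_nonneg γ)
  exact (abs_sub _ _).trans
    (add_le_add ((abs_add_le _ _).trans (add_le_add hx hv)) (hq_bdd x.1 x.2.1))

lemma ae_transitionKernel_abs_reward_le (hR : ∀ p, ∀ᵐ r ∂(R p), |r| ≤ Rmax) (s : S) :
    ∀ᵐ y ∂(transitionKernel P R πb s), |y.2.1| ≤ Rmax := by
  have hmeas : MeasurableSet {r : ℝ | |r| ≤ Rmax} := measurableSet_le (by fun_prop) (by fun_prop)
  refine Kernel.ae_compProd_of_ae_ae (hmeas.preimage (by fun_prop)) (.of_forall fun a ↦ ?_)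
  rw [Kernel.prod_apply]
  exact Measure.quasiMeasurePreserving_fst.ae (hR (s, a))

lemma ae_dataLaw_abs_reward_le [IsMarkovKernel πb] {μb : Measure S} [SFinite μb]
    (hR : ∀ p, ∀ᵐ r ∂(R p), |r| ≤ Rmax) :
    ∀ᵐ x ∂(dataLaw P R πb μb), |x.2.2.1| ≤ Rmax := by
  rw [dataLaw_eq_compProd]
  exact Measure.ae_compProd_of_ae_ae (measurableSet_le (by fun_prop) (by fun_prop))
    (.of_forall fun s ↦ ae_transitionKernel_abs_reward_le hR s)

lemma integral_tdError_eq_zero (hR : ∀ p, ∀ᵐ r ∂(R p), |r| ≤ Rmax)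
    (hq : Measurable (Function.uncurry q)) (hq_bdd : ∀ s a, |q s a| ≤ C)
    (hbellman : ∀ s a, q s a =
      (∫ r, r ∂(R (s, a))) + γ * ∫ s', (∫ a', q s' a' ∂(πe s')) ∂(P (s, a))) (s : S) (a : A) :
    ∫ y, tdError γ πe q (s, a, y) ∂((R ×ₖ P) (s, a)) = 0 := by
  have hr : Integrable (fun r : ℝ ↦ r) (R (s, a)) :=
    .of_bound measurable_id.aestronglyMeasurable Rmax (hR (s, a))
  have hv : Integrable (fun s' ↦ γ * ∫ a', q s' a' ∂(πe s')) (P (s, a)) :=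
    (Integrable.of_bound (measurable_integral_kernel hq).aestronglyMeasurable C
      (.of_forall (abs_integral_kernel_le hq_bdd))).const_mul γ
  have hsum : Integrable (fun y : ℝ × S ↦ y.1 + γ * ∫ a', q y.2 a' ∂(πe y.2))
      ((R (s, a)).prod (P (s, a))) := (hr.comp_fst _).add (hv.comp_snd _)
  rw [Kernel.prod_apply]
  simp only [tdError]
  rw [integral_sub hsum (integrable_const _), integral_add (hr.comp_fst _) (hv.comp_snd _),
    integral_fun_fst (fun r : ℝ ↦ r), integral_fun_snd (fun s' ↦ γ * ∫ a', q s' a' ∂(πe s')),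
    integral_const_mul, hbellman s a]
  simp

lemma integral_transitionKernel_mul_tdError_eq_zero [IsMarkovKernel πb]
    (hR : ∀ p, ∀ᵐ r ∂(R p), |r| ≤ Rmax)
    (hη : Measurable (Function.uncurry η)) (hη_bdd : ∀ s a, |η s a| ≤ Cη)
    (hq : Measurable (Function.uncurry q)) (hq_bdd : ∀ s a, |q s a| ≤ C)
    (hbellman : ∀ s a, q s a =
      (∫ r, r ∂(R (s, a))) + γ * ∫ s', (∫ a', q s' a' ∂(πe s')) ∂(P (s, a))) (s : S) :
    ∫ y, η s y.1 * tdError γ πe q (s, y) ∂(transitionKernel P R πb s) = 0 := by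
  have htd := measurable_tdError (γ := γ) (πe := πe) hq
  have hint : Integrable (fun y ↦ η s y.1 * tdError γ πe q (s, y)) (transitionKernel P R πb s) := by
    refine .of_bound (by fun_prop) (Cη * (Rmax + |γ| * C + C)) ?_
    filter_upwards [ae_transitionKernel_abs_reward_le (P := P) (πb := πb) hR s] with y hy
    rw [Real.norm_eq_abs, abs_mul]
    exact mul_le_mul (hη_bdd s y.1) (abs_tdError_le hq_bdd hy) (abs_nonneg _)
      ((abs_nonneg _).trans (hη_bdd s y.1))
  rw [transitionKernel, integral_compProd hint]
  simp only [integral_const_mul, integral_tdError_eq_zero hR hq hq_bdd hbellman, mul_zero,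
    integral_zero]

end TemporalDifference

section OracleAverage

lemma tendsto_integral_comp_of_tendstoInDistribution {ι E Ω' : Type*} {Ω : ι → Type*}
    [TopologicalSpace E] [MeasurableSpace E] [OpensMeasurableSpace E]
    {mΩ : ∀ i, MeasurableSpace (Ω i)} {μ : ∀ i, Measure (Ω i)} [∀ i, IsProbabilityMeasure (μ i)]
    {mΩ' : MeasurableSpace Ω'} {μ' : Measure Ω'} [IsProbabilityMeasure μ'] {l : Filter ι}
    {X : ∀ i, Ω i → E} {Y : Ω' → E} (h : TendstoInDistribution X l Y μ μ') (f : E →ᵇ ℝ) :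
    Tendsto (fun i ↦ ∫ ω, f (X i ω) ∂(μ i)) l (𝓝 (∫ ω, f (Y ω) ∂μ')) := by
  have hlim := ProbabilityMeasure.tendsto_iff_forall_integral_tendsto.1 h.tendsto f
  have hf {ν : Measure E} : AEStronglyMeasurable f ν :=
    f.continuous.measurable.aestronglyMeasurable
  simpa only [ProbabilityMeasure.coe_mk, integral_map (h.forall_aemeasurable _) hf,
    integral_map h.aemeasurable_limit hf] using hlim

lemma sqrt_mul_average_sub {n : ℕ} (hn : n ≠ 0) (a : ℕ → ℝ) (c : ℝ) :
    √n * ((n : ℝ)⁻¹ * ∑ k ∈ Finset.range n, a k - c) =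
      (√n)⁻¹ * ∑ k ∈ Finset.range n, (a k - c) := by
  have hpos : 0 < (n : ℝ) := by positivity
  rw [Finset.sum_sub_distrib, Finset.sum_const, Finset.card_range, nsmul_eq_mul]
  field_simp
  rw [Real.sq_sqrt hpos.le]

lemma psiDRL_sub_eq_mul_tdError (γ : ℝ) (μe : Measure S) (πe : Kernel S A) (η : S → A → ℝ)
    (w : S → ℝ) (q : S → A → ℝ) (x : S × A × ℝ × S) :
    psiDRL γ μe πe η w q x - (1 - γ) * ∫ s, (∫ a, q s a ∂(πe s)) ∂μe =
      w x.1 * η x.1 x.2.1 * tdError γ πe q x :=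
  add_sub_cancel_left _ _

theorem oracle_DRL_clt_alpha_mixing_general
    (P : Kernel (S × A) S) [IsMarkovKernel P] (R : Kernel (S × A) ℝ) [IsMarkovKernel R]
    {Rmax : ℝ} (hR : ∀ p, ∀ᵐ r ∂(R p), |r| ≤ Rmax) (γ : ℝ)
    (πe πb : Kernel S A) [IsMarkovKernel πe] [IsMarkovKernel πb]
    (μe μb : Measure S) [IsFiniteMeasure μe] [IsProbabilityMeasure μb]
    (hstat : stateKernel P πb ∘ₘ μb = μb)
    {η : S → A → ℝ} (hη : Measurable (Function.uncurry η)) {Cη : ℝ} (hη_bdd : ∀ s a, |η s a| ≤ Cη)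
    {w : S → ℝ} (hw : Measurable w) {Cw : ℝ} (hw_bdd : ∀ s, |w s| ≤ Cw)
    {q : S → A → ℝ} (hq : Measurable (Function.uncurry q)) {C : ℝ} (hq_bdd : ∀ s a, |q s a| ≤ C)
    (hbellman : ∀ s a, q s a =
      (∫ r, r ∂(R (s, a))) + γ * ∫ s', (∫ a', q s' a' ∂(πe s')) ∂(P (s, a)))
    {Pb : Measure (ℕ → S × A × ℝ)} [IsProbabilityMeasure Pb] (hPb : IsTrajectoryLaw P R πb μb Pb)
    (hmix : Tendsto (alphaMix Pb) atTop (𝓝 0)) (f : ℝ →ᵇ ℝ) :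
    Tendsto
      (fun T : ℕ ↦ ∫ ω,
        f (√(T + 1) * (((T : ℝ) + 1)⁻¹ *
            (∑ t ∈ Finset.range (T + 1), psiDRL γ μe πe η w q (Xt t ω)) -
          (1 - γ) * ∫ s, (∫ a, q s a ∂(πe s)) ∂μe)) ∂Pb)
      atTop
      (𝓝 (∫ x, f x ∂(gaussianReal 0
        (∫ x, (w x.1 * η x.1 x.2.1 * tdError γ πe q x) ^ 2 ∂(dataLaw P R πb μb)).toNNReal))) := by
  have htd := measurable_tdError (γ := γ) (πe := πe) hq
  have hzero (s : S) :
      ∫ y, w s * η s y.1 * tdError γ πe q (s, y) ∂(transitionKernel P R πb s) = 0 := by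
    simp only [mul_assoc, integral_const_mul,
      integral_transitionKernel_mul_tdError_eq_zero hR hη hη_bdd hq hq_bdd hbellman, mul_zero]
  have hbdd : ∀ᵐ x ∂(dataLaw P R πb μb),
      |w x.1 * η x.1 x.2.1 * tdError γ πe q x| ≤ Cw * Cη * (Rmax + |γ| * C + C) := by
    filter_upwards [ae_dataLaw_abs_reward_le (P := P) (πb := πb) hR] with x hx
    rw [abs_mul, abs_mul]
    have hCw := (abs_nonneg _).trans (hw_bdd x.1)
    have hCη := (abs_nonneg _).trans (hη_bdd x.1 x.2.1)
    gcongr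
    exacts [hw_bdd x.1, hη_bdd x.1 x.2.1, abs_tdError_le hq_bdd hx]
  have hclt := hPb.tendstoInDistribution_inv_sqrt_mul_sum_comp_Xt hstat hmix
    (z := fun x ↦ w x.1 * η x.1 x.2.1 * tdError γ πe q x) (by fun_prop) hbdd hzero HasLaw.id
  refine ((tendsto_integral_comp_of_tendstoInDistribution hclt f).comp
    (tendsto_add_atTop_nat 1)).congr fun T ↦ ?_
  simp only [Function.comp_apply, ← psiDRL_sub_eq_mul_tdError γ μe]
  simp only [← sqrt_mul_average_sub T.succ_ne_zero]
  push_cast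
  rfl

end OracleAverage

/-- Theorem 9: asymptotic normality of the oracle DRL time-average under
α-mixing: the law of `√(T+1)·((T+1)⁻¹ Σ_{t≤T} ψ(X_t; w, q) − ρ)` under `P_b` converges
weakly to `N(0, σ²)` with `σ² = E_D[w(s)²η(s,a)²(r + γ v(s') − q(s,a))²]`. -/
theorem oracle_DRL_clt_alpha_mixing
    (P : Kernel (S × A) S) [IsMarkovKernel P]
    (Rmax : ℝ) (hRmax : 0 < Rmax)
    (R : Kernel (S × A) ℝ) [IsMarkovKernel R]
    (hR : ∀ p : S × A, R p (Set.Icc (0 : ℝ) Rmax)ᶜ = 0)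
    (γ : ℝ) (hγ0 : 0 < γ) (hγ1 : γ < 1)
    (πe πb : Kernel S A) [IsMarkovKernel πe] [IsMarkovKernel πb]
    (μe μb : Measure S) [IsProbabilityMeasure μe] [IsProbabilityMeasure μb]
    -- stationarity: μ_b is invariant for the behavior state chain
    (hstat : μb.bind (fun s => stateKernel P πb s) = μb)
    -- the policy density ratio η, bounded: 0 ≤ η ≤ C_η
    (η : S → A → ℝ) (hη_meas : Measurable (Function.uncurry η))
    (Cη : ℝ) (hη_bdd : ∀ s a, 0 ≤ η s a ∧ η s a ≤ Cη)
    (hη : ∀ᵐ s ∂μb, πe s = (πb s).withDensity fun a => ENNReal.ofReal (η s a))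
    -- the stationary density ratio w: 0 ≤ w ≤ C_w, measurable density of d_γ wrt μ_b
    (w : S → ℝ) (hw_meas : Measurable w)
    (Cw : ℝ) (hw_bdd : ∀ s, 0 ≤ w s ∧ w s ≤ Cw)
    (hw : dgamma γ μe (stateKernel P πe) =
      μb.withDensity fun s => ENNReal.ofReal (w s))
    -- the q-function: bounded, measurable and satisfying the Bellman evaluation equation
    (q : S → A → ℝ) (hq_meas : Measurable (Function.uncurry q))
    (hq_bdd : ∃ C : ℝ, ∀ s a, |q s a| ≤ C)
    (hq_bellman : ∀ s a, q s a =
      (∫ r, r ∂(R (s, a))) + γ * ∫ s', (∫ a', q s' a' ∂(πe s')) ∂(P (s, a)))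
    -- the trajectory law P_b, characterized by its finite-dimensional prefixes
    (Pb : Measure (ℕ → S × A × ℝ)) [IsProbabilityMeasure Pb]
    (hPb : ∀ n : ℕ, Pb.map (fun ω => fun i : Fin (n + 1) => ω i) = finLaw P R πb μb n)
    -- summable α-mixing coefficients: Σ_{m ≥ 1} α_m < ∞
    (hmix : Summable fun m : ℕ => alphaMix (S := S) (A := A) Pb (m + 1)) :
    ∀ f : ℝ →ᵇ ℝ,
      Tendsto
        (fun T : ℕ => ∫ ω,
          f (Real.sqrt (T + 1) *
            (((T : ℝ) + 1)⁻¹ *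
                (∑ t ∈ Finset.range (T + 1), psiDRL γ μe πe η w q (Xt t ω)) -
              (1 - γ) * ∫ s, (∫ a, q s a ∂(πe s)) ∂μe)) ∂Pb)
        atTop
        (nhds (∫ x, f x
          ∂(gaussianReal 0
            (Real.toNNReal (∫ x, (w x.1 * η x.1 x.2.1 *
              (x.2.2.1 + γ * (∫ a, q x.2.2.2 a ∂(πe x.2.2.2)) - q x.1 x.2.1)) ^ 2
              ∂(dataLaw P R πb μb)))))) := by
  obtain ⟨C, hC⟩ := hq_bdd
  exact oracle_DRL_clt_alpha_mixing_general P R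
    (fun p ↦ Eventually.mono (hR p) fun r hr ↦ abs_le.2 ⟨by linarith [hr.1], hr.2⟩) γ πe πb μe μb
    hstat hη_meas (fun s a ↦ (abs_of_nonneg (hη_bdd s a).1).trans_le (hη_bdd s a).2)
    hw_meas (fun s ↦ (abs_of_nonneg (hw_bdd s).1).trans_le (hw_bdd s).2) hq_meas hC hq_bellman hPb
    ((tendsto_add_atTop_iff_nat 1).1 hmix.tendsto_atTop_zero)

end
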